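/- arXiv:0804.2146 — 3 statements merged into one kernel-verified Lean document; each statement's English description precedes it below -/
import Mathlib

section
/- Let h₀ and h₁ be complex Hilbert spaces, let E₁₁ be a bounded self-adjoint operator on h₁, and let E₁₀ : h₀ → h₁ be a bounded operator. Then 1 + (i/2)E₁₁ is invertible in the bounded operators on h₁, and defining S = (1 − (i/2)E₁₁)·(1 + (i/2)E₁₁)^{-1} and L = −i·(1 + (i/2)E₁₁)^{-1}·E₁₀, for all u, v ∈ h₁ and Φ ∈ h₀ the following are equivalent: (a) i·u − i·v + E₁₁·((u + v)/2) + E₁₀·Φ = 0; (b) v = S·u + L·Φ. (This is the boundary condition a₋Φ = S a₊Φ + LΦ defining the domain of the self-adjoint extension K = K₀ + Υ in the Chebotarev–Gregoratti Hamiltonian, with u, v playing the roles of a₊Φ and a₋Φ.) -/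
open ContinuousLinearMap

/-!
Put `T = (i/2)E₁₁`. Multiplied by `-i`, the coefficient of `a⋆†` becomes
`(1 - T)u - iE₁₀Φ - (1 + T)v`, and since `-(i/2)⁻¹ = 2i` is not in the (real) spectrum of `E₁₁`,
the equation can be solved for `v`. The inverse of `1 + T` commutes with `1 - T`, which puts the
solution in the form `Su + LΦ`.
-/

section Algebra

theorem isUnit_one_add_smul_iff {𝕜 A : Type*} [Field 𝕜] [Ring A] [Algebra 𝕜 A] {c : 𝕜}
    (hc : c ≠ 0) (a : A) : IsUnit (1 + c • a) ↔ -c⁻¹ ∉ spectrum 𝕜 a := by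
  have hr : -c⁻¹ ≠ 0 := neg_ne_zero.mpr (inv_ne_zero hc)
  have h := IsUnit.smul_sub_iff_sub_inv_smul (r := Units.mk0 _ hr) (a := a)
  rw [spectrum.notMem_iff, Algebra.algebraMap_eq_smul_one]
  simpa [Units.smul_def, inv_neg, sub_neg_eq_add] using h.symm

theorem commute_ringInverse_right {R : Type*} [MonoidWithZero R] {a b : R} (h : Commute a b) :
    Commute a (Ring.inverse b) := by
  by_cases hb : IsUnit b
  · obtain ⟨b, rfl⟩ := hb
    rw [Ring.inverse_unit]
    exact h.units_inv_right
  · rw [Ring.inverse_non_unit b hb]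
    exact Commute.zero_right a

theorem eq_ringInverse_smul_iff {R X : Type*} [MonoidWithZero R] [MulAction R X] {a : R}
    (ha : IsUnit a) {x y : X} : x = Ring.inverse a • y ↔ a • x = y := by
  obtain ⟨g, rfl⟩ := ha
  rw [Ring.inverse_unit]
  exact eq_inv_smul_iff (g := g)

theorem eq_one_sub_mul_ringInverse_smul_add_iff {R M : Type*} [Ring R] [AddCommGroup M]
    [Module R M] {a : R} (ha : IsUnit (1 + a)) {u v w : M} :
    v = ((1 - a) * Ring.inverse (1 + a)) • u + Ring.inverse (1 + a) • w ↔
      (1 + a) • v = (1 - a) • u + w := by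
  have h_comm : Commute (1 - a) (1 + a) :=
    (Commute.one_right _).add_right ((Commute.one_left a).sub_left (Commute.refl a))
  rw [(commute_ringInverse_right h_comm).eq, mul_smul, ← smul_add, eq_ringInverse_smul_iff ha]

end Algebra

section BoundaryCondition

variable {M₀ M₁ : Type*} [AddCommGroup M₀] [Module ℂ M₀] [TopologicalSpace M₀]
  [AddCommGroup M₁] [Module ℂ M₁] [TopologicalSpace M₁] [IsTopologicalAddGroup M₁]
  [ContinuousConstSMul ℂ M₁]

theorem neg_I_smul_boundary_coefficient (E : M₁ →L[ℂ] M₁) (u v w : M₁) :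
    (-Complex.I) • (Complex.I • u - Complex.I • v + E (((1 : ℂ) / 2) • (u + v)) + w) =
      (1 - (Complex.I / 2) • E) u + (-Complex.I) • w - (1 + (Complex.I / 2) • E) v := by
  have h_sub : (1 - (Complex.I / 2) • E) u = u - (Complex.I / 2) • E u := rfl
  have h_add : (1 + (Complex.I / 2) • E) v = v + (Complex.I / 2) • E v := rfl
  rw [h_sub, h_add, map_smul, map_add]
  linear_combination (norm := module) (-Complex.I_mul_I) • (u - v)

theorem boundary_coefficient_eq_zero_iff (E : M₁ →L[ℂ] M₁) (u v w : M₁) :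
    Complex.I • u - Complex.I • v + E (((1 : ℂ) / 2) • (u + v)) + w = 0 ↔
      (1 + (Complex.I / 2) • E) v = (1 - (Complex.I / 2) • E) u + (-Complex.I) • w := by
  rw [← smul_eq_zero_iff_right (neg_ne_zero.mpr Complex.I_ne_zero),
    neg_I_smul_boundary_coefficient, sub_eq_zero, eq_comm]

theorem boundary_condition_second_quantized_general (E₁₁ : M₁ →L[ℂ] M₁)
    (hE₁₁ : 2 * Complex.I ∉ spectrum ℂ E₁₁) (E₁₀ : M₀ →L[ℂ] M₁) :
    IsUnit (1 + (Complex.I / 2) • E₁₁) ∧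
    ∀ (u v : M₁) (Φ : M₀),
      (Complex.I • u - Complex.I • v + E₁₁ (((1 : ℂ) / 2) • (u + v)) + E₁₀ Φ = 0 ↔
        v = ((1 - (Complex.I / 2) • E₁₁) * Ring.inverse (1 + (Complex.I / 2) • E₁₁)) u
          + ((-Complex.I) • (Ring.inverse (1 + (Complex.I / 2) • E₁₁) ∘L E₁₀)) Φ) := by
  have h_inv : -(Complex.I / 2)⁻¹ = 2 * Complex.I := by
    rw [inv_div, Complex.div_I, neg_neg]
  have hU : IsUnit (1 + (Complex.I / 2) • E₁₁) := by
    rwa [isUnit_one_add_smul_iff (by simp), h_inv]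
  refine ⟨hU, fun u v Φ ↦ ?_⟩
  rw [boundary_coefficient_eq_zero_iff, smul_apply, comp_apply,
    ← map_smul (Ring.inverse _)]
  exact (eq_one_sub_mul_ringInverse_smul_add_iff (M := M₁) hU).symm

end BoundaryCondition

/-- The boundary condition `a₋Φ = S a₊Φ + LΦ` defining the domain of the self-adjoint
extension `K = K₀ + Υ`: vanishing of the coefficient of `a⋆†`, namely
`(i a₊ − i a₋ + E₁₁ a⋆ + E₁₀)Φ = 0` with `a⋆ = (a₊ + a₋)/2`, is equivalent to
`a₋Φ = S a₊Φ + LΦ` with the Hudson–Parthasarathy parameters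
`S = (1 − (i/2)E₁₁)(1 + (i/2)E₁₁)⁻¹` and `L = −i(1 + (i/2)E₁₁)⁻¹E₁₀`. -/
theorem boundary_condition_second_quantized {h₀ h₁ : Type*}
    [NormedAddCommGroup h₀] [InnerProductSpace ℂ h₀] [CompleteSpace h₀]
    [NormedAddCommGroup h₁] [InnerProductSpace ℂ h₁] [CompleteSpace h₁]
    (E₁₁ : h₁ →L[ℂ] h₁) (hE₁₁ : IsSelfAdjoint E₁₁) (E₁₀ : h₀ →L[ℂ] h₁) :
    IsUnit (1 + (Complex.I / 2) • E₁₁) ∧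
    ∀ (u v : h₁) (Φ : h₀),
      (Complex.I • u - Complex.I • v + E₁₁ (((1:ℂ)/2) • (u + v)) + E₁₀ Φ = 0 ↔
        v = ((1 - (Complex.I / 2) • E₁₁) * Ring.inverse (1 + (Complex.I / 2) • E₁₁)) u
          + ((-Complex.I) • (Ring.inverse (1 + (Complex.I / 2) • E₁₁) ∘L E₁₀)) Φ) := by
  refine boundary_condition_second_quantized_general E₁₁ (fun h ↦ ?_) E₁₀
  simpa using hE₁₁.im_eq_zero_of_mem_spectrum h
end

section
/- Let h₀ and h₁ be complex Hilbert spaces, E₁₁ a bounded self-adjoint operator on h₁, E₁₀ : h₀ → h₁ bounded, E₀₁ = E₁₀† : h₁ → h₀, and E₀₀ a bounded self-adjoint operator on h₀. Set R = (1 + (i/2)E₁₁)^{-1}, S = (1 − (i/2)E₁₁)·R, L = −i·R·E₁₀, and H = E₀₀ + (1/2)·E₀₁·((R − R†)/(2i))·E₁₀. Then for all u ∈ h₁ and Φ ∈ h₀, setting v = S·u + L·Φ, one has −i·(E₀₀·Φ + E₀₁·((u + v)/2)) = (−(1/2)·L†L − i·H)·Φ − L†·S·u. (This is the action −iK Φ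 = (−iK_ac − ½L†L − iH)Φ − L†S a₊Φ of the Chebotarev–Gregoratti Hamiltonian on its domain, with the absolutely continuous part K_ac subtracted; u and v play the roles of a₊Φ and a₋Φ.) -/
open ContinuousLinearMap

/-!
Since `(i/2) E₁₁` is skew-adjoint, `S` is its Cayley transform and hence unitary, while
`R = ½(1 + S)`. Two facts about `R` follow: `R†S = R` and `R†R = Re R`. On the domain
`½(u + v) = R u + ½ L Φ`. By the first fact `−i E₀₁ R u = −L†S u`. By the second, splitting `R` into
real and imaginary parts gives `E₀₁ L = −i L†L + E₀₁ (Im R) E₁₀`, whose two terms are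
the damping `−½L†L` and the correction to `E₀₀` in `H`.
-/

open scoped ComplexStarModule

section Cayley

variable {A : Type*}

theorem isUnit_one_add_of_mem_skewAdjoint [CStarAlgebra A] {x : A} (hx : x ∈ skewAdjoint A) :
    IsUnit (1 + x) := by
  have hsa : IsSelfAdjoint (-Complex.I • x) := by
    simp [isSelfAdjoint_iff, skewAdjoint.mem_iff.mp hx]
  have hI : Complex.I ∉ spectrum ℂ (-Complex.I • x) := fun h ↦ by
    simpa using hsa.im_eq_zero_of_mem_spectrum h
  have hfactor : algebraMap ℂ A Complex.I - -Complex.I • x = Complex.I • (1 + x) := by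
    rw [Algebra.algebraMap_eq_smul_one]
    module
  rw [spectrum.notMem_iff, hfactor] at hI
  exact (isUnit_smul_iff (Units.mk0 Complex.I Complex.I_ne_zero) (1 + x)).mp hI

theorem one_sub_mul_inverse_one_add_mem_unitary [Ring A] [StarRing A] {x : A}
    (hx : x ∈ skewAdjoint A) (hunit : IsUnit (1 + x)) :
    (1 - x) * Ring.inverse (1 + x) ∈ unitary A := by
  have := skewAdjoint.isStarNormal_of_mem hx
  have hstar : star (1 + x) = 1 - x := by
    rw [star_add, star_one, skewAdjoint.mem_iff.mp hx, sub_eq_add_neg]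
  obtain ⟨w, hw⟩ := hunit
  have hnormal : star w * w = w * star w := by
    ext
    simpa [hw] using star_comm_self' (1 + x)
  rw [← hstar, ← hw, Ring.inverse_unit, ← Units.coe_star, Units.mul_inv_mem_unitary, star_star]
  exact hnormal.symm

theorem inverse_one_add_eq_half_smul {𝕜 : Type*} [Field 𝕜] [NeZero (2 : 𝕜)] [Ring A] [Algebra 𝕜 A]
    {x : A} (hunit : IsUnit (1 + x)) :
    Ring.inverse (1 + x) = (1 / 2 : 𝕜) • (1 + (1 - x) * Ring.inverse (1 + x)) := by
  have hsum : 1 + (1 - x) * Ring.inverse (1 + x) = (2 : 𝕜) • Ring.inverse (1 + x) := by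
    calc 1 + (1 - x) * Ring.inverse (1 + x)
        = (1 + x) * Ring.inverse (1 + x) + (1 - x) * Ring.inverse (1 + x) := by
          rw [Ring.mul_inverse_cancel _ hunit]
      _ = (2 : 𝕜) • Ring.inverse (1 + x) := by
          rw [← add_mul, add_add_sub_cancel, add_mul, one_mul, two_smul]
  rw [hsum, one_div, inv_smul_smul₀ two_ne_zero]

end Cayley

section Isometry

variable {A : Type*} [Ring A] [StarRing A]

theorem star_half_one_add_mul {𝕜 : Type*} [Field 𝕜] [StarRing 𝕜] [Algebra 𝕜 A] [StarModule 𝕜 A]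
    {r s : A} (hs : star s * s = 1) (hr : r = (1 / 2 : 𝕜) • (1 + s)) : star r * s = r := by
  have hhalf : star (1 / 2 : 𝕜) = 1 / 2 := by simp
  rw [hr, star_smul, hhalf, smul_mul_assoc, star_add, star_one, add_mul, one_mul, hs, add_comm]

theorem star_half_one_add_mul_self_eq_realPart [Algebra ℂ A] [StarModule ℂ A] {r s : A}
    (hs : star s * s = 1) (hr : r = (1 / 2 : ℂ) • (1 + s)) : star r * r = ℜ r := by
  calc star r * r = star r * ((1 / 2 : ℂ) • (1 + s)) := by rw [← hr]
    _ = (1 / 2 : ℂ) • (star r + star r * s) := by rw [mul_smul_comm, mul_add, mul_one]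
    _ = (1 / 2 : ℂ) • (r + star r) := by rw [star_half_one_add_mul hs hr, add_comm]
    _ = ℜ r := by
        rw [realPart_apply_coe, ← Complex.coe_smul]
        simp

end Isometry

theorem imaginaryPart_coe_eq_inv_smul {A : Type*} [AddCommGroup A] [Module ℂ A] [StarAddMonoid A]
    [StarModule ℂ A] (a : A) : (ℑ a : A) = (2 * Complex.I)⁻¹ • (a - star a) := by
  rw [imaginaryPart_apply_coe, ← Complex.coe_smul, smul_smul]
  congr 1
  simp [mul_comm]

section Coupling

variable {h₀ h₁ : Type*}
  [NormedAddCommGroup h₀] [InnerProductSpace ℂ h₀] [CompleteSpace h₀]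
  [NormedAddCommGroup h₁] [InnerProductSpace ℂ h₁] [CompleteSpace h₁]
  {E₁₀ L : h₀ →L[ℂ] h₁} {R S : h₁ →L[ℂ] h₁}

theorem adjoint_coupling_apply (hL : L = (-Complex.I) • (R ∘L E₁₀)) (x : h₁) :
    adjoint L x = Complex.I • adjoint E₁₀ (star R x) := by
  rw [hL, map_smulₛₗ, adjoint_comp]
  simp [star_eq_adjoint]

theorem adjoint_coupling_scattering_apply (hRS : star R * S = R)
    (hL : L = (-Complex.I) • (R ∘L E₁₀)) (u : h₁) :
    adjoint L (S u) = Complex.I • adjoint E₁₀ (R u) := by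
  rw [adjoint_coupling_apply hL, ← mul_apply_eq_comp, hRS]

theorem adjoint_apply_coupling (hR : star R * R = ℜ R)
    (hL : L = (-Complex.I) • (R ∘L E₁₀)) (Φ : h₀) :
    adjoint E₁₀ (L Φ) =
      -Complex.I • adjoint L (L Φ) + adjoint E₁₀ ((ℑ R : h₁ →L[ℂ] h₁) (E₁₀ Φ)) := by
  have hLΦ : L Φ = -Complex.I • R (E₁₀ Φ) := by simp [hL]
  have hLL : adjoint L (L Φ) = adjoint E₁₀ ((ℜ R : h₁ →L[ℂ] h₁) (E₁₀ Φ)) := by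
    rw [adjoint_coupling_apply hL, hLΦ, map_smul, ← mul_apply_eq_comp, hR, map_smul, smul_smul]
    simp
  have hsplit : R (E₁₀ Φ) =
      (ℜ R : h₁ →L[ℂ] h₁) (E₁₀ Φ) + Complex.I • (ℑ R : h₁ →L[ℂ] h₁) (E₁₀ Φ) :=
    (DFunLike.congr_fun (realPart_add_I_smul_imaginaryPart R) (E₁₀ Φ)).symm
  rw [hLL, hLΦ, hsplit, smul_add, smul_smul, neg_mul, Complex.I_mul_I, neg_neg, one_smul,
    map_add, map_smul]

theorem hamiltonian_action_on_domain_general {E₀₀ H : h₀ →L[ℂ] h₀}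
    (hS : star S * S = 1) (hR : R = (1 / 2 : ℂ) • (1 + S))
    (hL : L = (-Complex.I) • (R ∘L E₁₀))
    (hH : H = E₀₀ + (1 / 2 : ℂ) • (adjoint E₁₀ ∘L ((ℑ R : h₁ →L[ℂ] h₁) ∘L E₁₀)))
    {u v : h₁} {Φ : h₀} (hv : v = S u + L Φ) :
    (-Complex.I) • (E₀₀ Φ + adjoint E₁₀ ((1 / 2 : ℂ) • (u + v)))
      = (-(1 : ℂ) / 2) • adjoint L (L Φ) - Complex.I • H Φ - adjoint L (S u) := by
  have haverage : (1 / 2 : ℂ) • (u + v) = R u + (1 / 2 : ℂ) • L Φ := by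
    simp only [hv, hR, smul_apply, add_apply, one_apply_eq_self]
    module
  have hHΦ : H Φ =
      E₀₀ Φ + (1 / 2 : ℂ) • adjoint E₁₀ ((ℑ R : h₁ →L[ℂ] h₁) (E₁₀ Φ)) := by
    simp [hH]
  rw [haverage, map_add, map_smul,
    adjoint_apply_coupling (star_half_one_add_mul_self_eq_realPart hS hR) hL,
    adjoint_coupling_scattering_apply (star_half_one_add_mul hS hR) hL, hHΦ]
  linear_combination (norm := module)
    Complex.I_mul_I • ((1 / 2 : ℂ) • adjoint L (L Φ))

end Coupling

/-- The action of the Chebotarev–Gregoratti Hamiltonian on its domain (with the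
absolutely continuous part subtracted): on vectors satisfying the boundary condition
`v = S u + L Φ` (where `u, v` play the roles of `a₊Φ, a₋Φ`), the remaining action
`−i(E₀₀Φ + E₀₁ a⋆Φ)` of the singular perturbation equals
`(−½L†L − iH)Φ − L†S a₊Φ`. -/
theorem hamiltonian_action_on_domain {h₀ h₁ : Type*}
    [NormedAddCommGroup h₀] [InnerProductSpace ℂ h₀] [CompleteSpace h₀]
    [NormedAddCommGroup h₁] [InnerProductSpace ℂ h₁] [CompleteSpace h₁]
    (E₁₁ : h₁ →L[ℂ] h₁) (hE₁₁ : IsSelfAdjoint E₁₁)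
    (E₁₀ : h₀ →L[ℂ] h₁) (E₀₁ : h₁ →L[ℂ] h₀) (hE₀₁ : E₀₁ = adjoint E₁₀)
    (E₀₀ : h₀ →L[ℂ] h₀) (hE₀₀ : IsSelfAdjoint E₀₀)
    (R : h₁ →L[ℂ] h₁) (hR : R = Ring.inverse (1 + (Complex.I / 2) • E₁₁))
    (S : h₁ →L[ℂ] h₁) (hS : S = (1 - (Complex.I / 2) • E₁₁) * R)
    (L : h₀ →L[ℂ] h₁) (hL : L = (-Complex.I) • (R ∘L E₁₀))
    (H : h₀ →L[ℂ] h₀)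
    (hH : H = E₀₀ + ((1:ℂ)/2) • (E₀₁ ∘L (((2 * Complex.I)⁻¹ • (R - adjoint R)) ∘L E₁₀))) :
    ∀ (u : h₁) (Φ : h₀) (v : h₁), v = S u + L Φ →
      (-Complex.I) • (E₀₀ Φ + E₀₁ (((1:ℂ)/2) • (u + v)))
        = (-(1:ℂ)/2) • (adjoint L) (L Φ) - Complex.I • H Φ - (adjoint L) (S u) := by
  intro u Φ v hv
  have hskew : (Complex.I / 2) • E₁₁ ∈ skewAdjoint (h₁ →L[ℂ] h₁) :=
    hE₁₁.smul_mem_skewAdjoint (by simp [skewAdjoint.mem_iff, neg_div])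
  have hunit := isUnit_one_add_of_mem_skewAdjoint hskew
  have hisometry : star S * S = 1 := by
    rw [hS, hR]
    exact Unitary.star_mul_self_of_mem (one_sub_mul_inverse_one_add_mem_unitary hskew hunit)
  have hhalf : R = (1 / 2 : ℂ) • (1 + S) := by
    rw [hS, hR]
    exact inverse_one_add_eq_half_smul hunit
  rw [← star_eq_adjoint, ← imaginaryPart_coe_eq_inv_smul, hE₀₁] at hH
  rw [hE₀₁]
  exact hamiltonian_action_on_domain_general hisometry hhalf hL hH hv
end

section
/- Let h₀ and h₁ be complex Hilbert spaces, E₁₁ a bounded self-adjoint operator on h₁, E₁₀ : h₀ → h₁ bounded, E₀₁ = E₁₀†, and E₀₀ a bounded operator on h₀. Set R = (1 + (i/2)E₁₁)^{-1}, L = −i·R·E₁₀, and H = E₀₀ + (1/2)·E₀₁·((R − R†)/(2i))·E₁₀. Then −i·E₀₀ − (1/2)·E₀₁·R·E₁₀ = −(1/2)·L†L − i·H. (This is the (0,0)-block of the Itô matrix identity G = −i(1 + (i/2)EΠ)^{-1}E = (−½L†L − iH, −L†S; L, S − 1): the upper-left entry −iE₀₀ − ½E₀ℓ(1 + (i/2)Eℓℓ)^{-1}Eℓ0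 equals −½L†L − iH.) -/
open ContinuousLinearMap

/-!
Write `ℜ` and `ℑ` for the real and imaginary parts of an operator. Self-adjointness of `E₁₁` means
that `u = 1 + (i/2)E₁₁` has real part `1`, so `u` is invertible, and conjugating `ℜ u` by
`R = u⁻¹` gives `R†R = ℜ R`. Hence in `E₀₁RE₁₀ = E₀₁(ℜ R)E₁₀ + i E₀₁(ℑ R)E₁₀` the first summand
is `L†L`, while the second is `2i` times the correction which `H` adds to `E₀₀`.
-/

open ComplexStarModule

theorem inv_two_mul_I_smul_sub_star {A : Type*} [AddCommGroup A] [StarAddMonoid A] [Module ℂ A]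
    [StarModule ℂ A] (a : A) : (2 * Complex.I)⁻¹ • (a - star a) = (ℑ a : A) := by
  rw [imaginaryPart_apply_coe, mul_inv_rev, Complex.inv_I, mul_smul, ← Complex.coe_smul,
    Complex.ofReal_inv, Complex.ofReal_ofNat]

theorem realPart_one_add_smul_of_isSelfAdjoint {A : Type*} [Ring A] [StarRing A] [Module ℂ A]
    [StarModule ℂ A] {a : A} (ha : IsSelfAdjoint a) {z : ℂ} (hz : z.re = 0) :
    ℜ (1 + z • a) = 1 := by
  rw [map_add, realPart_one, realPart_smul, hz, ha.imaginaryPart, zero_smul, smul_zero, sub_zero,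
    add_zero]

theorem coe_realPart_units_inv {A : Type*} [Ring A] [StarRing A] [Algebra ℂ A] [StarModule ℂ A]
    (u : Aˣ) :
    (ℜ (↑u⁻¹ : A) : A) = star (↑u⁻¹ : A) * (ℜ (u : A) : A) * (↑u⁻¹ : A) := by
  have hconj : star (↑u⁻¹ : A) * ((u : A) + star (u : A)) * ↑u⁻¹ = ↑u⁻¹ + star (↑u⁻¹ : A) := by
    rw [mul_add, add_mul, mul_assoc, u.mul_inv, mul_one, ← star_mul, u.mul_inv, star_one, one_mul,
      add_comm]
  rw [realPart_apply_coe, realPart_apply_coe, mul_smul_comm, smul_mul_assoc, hconj]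

section CStarAlgebra

variable {A : Type*} [CStarAlgebra A]

theorem isUnit_of_realPart_eq_one {u : A} (hu : ℜ u = 1) : IsUnit u := by
  have hspec : -Complex.I ∉ spectrum ℂ (-(ℑ u : A)) := fun h ↦ by
    simpa using (ℑ u).prop.neg.im_eq_zero_of_mem_spectrum h
  have hfactor : Complex.I • (algebraMap ℂ A (-Complex.I) - -(ℑ u : A)) = u := by
    conv_rhs => rw [← realPart_add_I_smul_imaginaryPart u, hu]
    simp [Algebra.algebraMap_eq_smul_one, smul_smul]
  rw [← hfactor]
  exact (spectrum.notMem_iff.mp hspec).smul (Units.mk0 Complex.I Complex.I_ne_zero)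

theorem star_inverse_mul_inverse_of_realPart_eq_one {u : A} (hu : ℜ u = 1) :
    star (Ring.inverse u) * Ring.inverse u = ℜ (Ring.inverse u) := by
  obtain ⟨v, rfl⟩ := isUnit_of_realPart_eq_one hu
  rw [Ring.inverse_unit, coe_realPart_units_inv, hu, selfAdjoint.val_one, mul_one]

end CStarAlgebra

theorem adjoint_smul_comp_smul_of_norm_eq_one {𝕜 E F : Type*} [RCLike 𝕜]
    [NormedAddCommGroup E] [InnerProductSpace 𝕜 E] [CompleteSpace E]
    [NormedAddCommGroup F] [InnerProductSpace 𝕜 F] [CompleteSpace F]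
    {c : 𝕜} (hc : ‖c‖ = 1) (T : E →L[𝕜] F) :
    adjoint (c • T) ∘L (c • T) = adjoint T ∘L T := by
  rw [map_smulₛₗ, smul_comp, comp_smul, smul_smul, RCLike.conj_mul, hc, RCLike.ofReal_one, one_pow,
    one_smul]

theorem comp_comp_eq_realPart_add_I_smul_imaginaryPart {E F G : Type*}
    [NormedAddCommGroup E] [NormedSpace ℂ E] [NormedAddCommGroup G] [NormedSpace ℂ G]
    [NormedAddCommGroup F] [InnerProductSpace ℂ F] [CompleteSpace F]
    (S : F →L[ℂ] G) (R : F →L[ℂ] F) (T : E →L[ℂ] F) :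
    S ∘L R ∘L T =
      S ∘L (ℜ R : F →L[ℂ] F) ∘L T + Complex.I • (S ∘L (ℑ R : F →L[ℂ] F) ∘L T) := by
  rw [← comp_smul, ← comp_add, ← smul_comp, ← add_comp, realPart_add_I_smul_imaginaryPart]

/-- The `(0,0)`-block of the Itô matrix identity
`G = −i(1 + (i/2)EΠ)⁻¹E = (−½L†L − iH, −L†S; L, S − 1)`: the upper-left entry
`−iE₀₀ − ½E₀ℓ(1 + (i/2)Eℓℓ)⁻¹Eℓ0` equals `−½L†L − iH`. -/
theorem ito_matrix_block_00 {h₀ h₁ : Type*}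
    [NormedAddCommGroup h₀] [InnerProductSpace ℂ h₀] [CompleteSpace h₀]
    [NormedAddCommGroup h₁] [InnerProductSpace ℂ h₁] [CompleteSpace h₁]
    (E₁₁ : h₁ →L[ℂ] h₁) (hE₁₁ : IsSelfAdjoint E₁₁)
    (E₁₀ : h₀ →L[ℂ] h₁) (E₀₁ : h₁ →L[ℂ] h₀) (hE₀₁ : E₀₁ = adjoint E₁₀)
    (E₀₀ : h₀ →L[ℂ] h₀)
    (R : h₁ →L[ℂ] h₁) (hR : R = Ring.inverse (1 + (Complex.I / 2) • E₁₁))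
    (L : h₀ →L[ℂ] h₁) (hL : L = (-Complex.I) • (R ∘L E₁₀))
    (H : h₀ →L[ℂ] h₀)
    (hH : H = E₀₀ + ((1:ℂ)/2) • (E₀₁ ∘L (((2 * Complex.I)⁻¹ • (R - adjoint R)) ∘L E₁₀))) :
    (-Complex.I) • E₀₀ - ((1:ℂ)/2) • (E₀₁ ∘L (R ∘L E₁₀))
      = (-(1:ℂ)/2) • ((adjoint L) ∘L L) - Complex.I • H := by
  have hRR : adjoint R ∘L R = ℜ R := by
    rw [hR]
    exact star_inverse_mul_inverse_of_realPart_eq_one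
      (realPart_one_add_smul_of_isSelfAdjoint hE₁₁ (by simp))
  have hLL : adjoint L ∘L L = E₀₁ ∘L (ℜ R : h₁ →L[ℂ] h₁) ∘L E₁₀ := by
    rw [hL, adjoint_smul_comp_smul_of_norm_eq_one (by simp), adjoint_comp, ← hE₀₁, ← hRR,
      comp_assoc, comp_assoc]
  have hH' : H = E₀₀ + ((1 : ℂ) / 2) • (E₀₁ ∘L (ℑ R : h₁ →L[ℂ] h₁) ∘L E₁₀) := by
    rw [hH, ← star_eq_adjoint, inv_two_mul_I_smul_sub_star]
  rw [hLL, hH', comp_comp_eq_realPart_add_I_smul_imaginaryPart E₀₁ R]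
  module
end
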